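/- A word w lies in C(212) if and only if every column C of P(w) satisfies: (a) every column of length 1 has entry equal to 2, and (b) every column of length at least 2 contains both a 1 and a 2. -/

import Mathlib

namespace Plactic

/-- Insert `x` into a weakly increasing row, returning the new row and the bumped entry. -/
def rowInsert (x : ℕ) : List ℕ → List ℕ × Option ℕ
  | [] => ([x], none)
  | y :: ys =>
    if x < y then (x :: ys, some y)
    else
      let p := rowInsert x ys
      (y :: p.1, p.2)

/-- RSK insertion of `x` into a tableau given as a list of rows. -/
def tInsert (x : ℕ) : List (List ℕ) → List (List ℕ)
  | [] => [[x]]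
  | r :: rs =>
    match rowInsert x r with
    | (r', none) => r' :: rs
    | (r', some y) => r' :: tInsert y rs

/-- The RSK insertion tableau of a word. -/
def P (w : List ℕ) : List (List ℕ) := w.foldl (fun t x => tInsert x t) []

/-- The `i`-th row (0-indexed) of the insertion tableau of `w`. -/
def row (w : List ℕ) (i : ℕ) : List ℕ := (P w).getD i []

/-- The `j`-th column (0-indexed) of a tableau, read top to bottom. -/
def col (T : List (List ℕ)) (j : ℕ) : List ℕ := T.filterMap (fun r => r[j]?)

/-- An elementary Knuth transposition. -/
inductive KStep : List ℕ → List ℕ → Prop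
  | k1 (x y : List ℕ) (a b c : ℕ) : a ≤ b → b < c →
      KStep (x ++ [a, c, b] ++ y) (x ++ [c, a, b] ++ y)
  | k2 (x y : List ℕ) (a b c : ℕ) : a < b → b ≤ c →
      KStep (x ++ [b, a, c] ++ y) (x ++ [b, c, a] ++ y)

/-- Knuth equivalence: the equivalence relation generated by Knuth transpositions. -/
def KEquiv : List ℕ → List ℕ → Prop := Relation.EqvGen KStep

/-- The centralizer of `u` in the plactic monoid. -/
def Cent (u : List ℕ) : Set (List ℕ) := {w | KEquiv (u ++ w) (w ++ u)}

end Plactic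

/-!
Let `a < b` and `u = bab`. A letter commutes, in the plactic monoid, with every strictly decreasing
word containing it, and `b` commutes with `u`. Since `w` is the product of the columns of `P w`, it
commutes with `u` as soon as each column is either `b` alone or contains both `a` and `b`.

Conversely, let `w` commute with `u`, hence with every power of `u`, so that `w u^n` and `u^n w`
have the same insertion tableau. Multiplying `w` on the right by a large power of `u` bumps out of
the first row all entries in the open interval `(a, b)` or above `b`, and out of the second row all
entries above `b`. Multiplying `w` on the left by any word leaves every entry of the first row in
the first row, and every entry of the second row in the first two rows. So every entry of the first
row of `P w` is at most `a` or equal to `b`, and every entry of its second row is at most `b`.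
Moreover, for `t` equal to `a` or `b`, counting the entries `≤ t` in the first row of the two
products shows that the first row of `P w` has at most as many entries `≤ t` as `w` has letters `t`.
A column contains `t` at most once, and only if its top entry is `≤ t`; so every column whose top
entry is `≤ t` contains `t`.
-/

namespace Plactic

variable {r s u v w : List ℕ} {a b c j n t x y : ℕ}

/-! ### The plactic congruence -/

namespace KEquiv

@[refl]
lemma refl (u : List ℕ) : KEquiv u u := Relation.EqvGen.refl u

@[symm]
lemma symm (h : KEquiv u v) : KEquiv v u := Relation.EqvGen.symm _ _ h

@[trans]
lemma trans (h : KEquiv u v) (h' : KEquiv v w) : KEquiv u w := Relation.EqvGen.trans _ _ _ h h'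

instance : Trans KEquiv KEquiv KEquiv := ⟨trans⟩

lemma append_left (h : KEquiv u v) (p : List ℕ) : KEquiv (p ++ u) (p ++ v) := by
  induction h with
  | rel u v h =>
    refine .rel _ _ ?_
    cases h with
    | k1 x y a b c hab hbc => simpa using KStep.k1 (p ++ x) y a b c hab hbc
    | k2 x y a b c hab hbc => simpa using KStep.k2 (p ++ x) y a b c hab hbc
  | refl u => exact refl _
  | symm u v _ ih => exact ih.symm
  | trans u v w _ _ ih ih' => exact ih.trans ih'

lemma append_right (h : KEquiv u v) (q : List ℕ) : KEquiv (u ++ q) (v ++ q) := by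
  induction h with
  | rel u v h =>
    refine .rel _ _ ?_
    cases h with
    | k1 x y a b c hab hbc => simpa using KStep.k1 x (y ++ q) a b c hab hbc
    | k2 x y a b c hab hbc => simpa using KStep.k2 x (y ++ q) a b c hab hbc
  | refl u => exact refl _
  | symm u v _ ih => exact ih.symm
  | trans u v w _ _ ih ih' => exact ih.trans ih'

lemma cons (h : KEquiv u v) (x : ℕ) : KEquiv (x :: u) (x :: v) :=
  h.append_left [x]

lemma k1 (hab : a ≤ b) (hbc : b < c) (w : List ℕ) :
    KEquiv (a :: c :: b :: w) (c :: a :: b :: w) :=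
  .rel _ _ (.k1 [] w a b c hab hbc)

lemma k2 (hab : a < b) (hbc : b ≤ c) (w : List ℕ) :
    KEquiv (b :: a :: c :: w) (b :: c :: a :: w) :=
  .rel _ _ (.k2 [] w a b c hab hbc)

lemma perm (h : KEquiv u v) : u.Perm v := by
  induction h with
  | rel u v h =>
    cases h with
    | k1 x y a b c => exact ((List.Perm.swap c a [b]).append_left x).append_right y
    | k2 x y a b c => exact (((List.Perm.swap c a []).cons b).append_left x).append_right y
  | refl u => rfl
  | symm u v _ ih => exact ih.symm
  | trans u v w _ _ ih ih' => exact ih.trans ih'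

end KEquiv

lemma kEquiv_row_append_singleton (hr : (y :: r).Pairwise (· ≤ ·)) (hxy : x < y) :
    KEquiv (y :: (r ++ [x])) (y :: x :: r) := by
  induction r generalizing y with
  | nil => rfl
  | cons z r ih =>
    have hyz : y ≤ z := List.rel_of_pairwise_cons hr (by simp)
    exact ((ih hr.of_cons (by omega)).cons y).trans (KEquiv.k2 hxy hyz r).symm

lemma kEquiv_row_append_cons (hr : (r ++ [x]).Pairwise (· ≤ ·)) (hxy : x < y) :
    KEquiv (r ++ [y, x]) (y :: (r ++ [x])) := by
  induction r with
  | nil => rfl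
  | cons z r ih =>
    obtain ⟨hz, hr⟩ := List.pairwise_cons.1 hr
    have hrow := (ih hr).cons z
    refine hrow.trans ?_
    rcases r with _ | ⟨z', r⟩
    · exact KEquiv.k1 (hz x (by simp)) hxy []
    · have hz'x : z' ≤ x := List.rel_of_pairwise_cons hr (by simp)
      exact KEquiv.k1 (hz z' (by simp)) (by omega) (r ++ [x])

lemma kEquiv_cons_column_append_cons (hu : (u ++ [x]).Pairwise (· > ·)) (v : List ℕ) :
    KEquiv (x :: (u ++ x :: v)) (u ++ x :: x :: v) := by
  induction u with
  | nil => rfl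
  | cons d u ih =>
    obtain ⟨hd, hu⟩ := List.pairwise_cons.1 hu
    have hxd : x < d := hd x (by simp)
    refine KEquiv.trans ?_ ((ih hu).cons d)
    rcases u with _ | ⟨e, u⟩
    · exact KEquiv.k1 le_rfl hxd v
    · have hxe : x < e := List.rel_of_pairwise_cons hu (by simp)
      exact KEquiv.k1 hxe.le (hd e (by simp)) (u ++ x :: v)

lemma kEquiv_cons_column_append_singleton (hv : (y :: v).Pairwise (· > ·)) (hyx : y ≤ x) :
    KEquiv (y :: (v ++ [x])) (y :: x :: v) := by
  induction v generalizing y with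
  | nil => rfl
  | cons d v ih =>
    have hdy : d < y := List.rel_of_pairwise_cons hv (by simp)
    exact ((ih hv.of_cons (by omega)).cons y).trans (KEquiv.k2 hdy hyx v)

/-! ### Centralizers -/

lemma mem_Cent_comm : v ∈ Cent u ↔ u ∈ Cent v :=
  ⟨KEquiv.symm, KEquiv.symm⟩

lemma mem_Cent_of_kEquiv (h : KEquiv v w) (hw : w ∈ Cent u) : v ∈ Cent u :=
  calc
    KEquiv (u ++ v) (u ++ w) := h.append_left u
    KEquiv _ (w ++ u) := hw
    KEquiv _ (v ++ u) := h.symm.append_right u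

lemma append_mem_Cent (hv : v ∈ Cent u) (hw : w ∈ Cent u) : v ++ w ∈ Cent u := by
  have hvw : KEquiv (u ++ v ++ w) (v ++ w ++ u) :=
    calc
      KEquiv (u ++ v ++ w) (v ++ u ++ w) := KEquiv.append_right hv w
      KEquiv _ (v ++ w ++ u) := by simpa using KEquiv.append_left hw v
  simpa [Cent] using hvw

/-- The `n`-th power of a word in the free monoid. -/
def power (w : List ℕ) (n : ℕ) : List ℕ := (List.replicate n w).flatten

lemma power_succ (w : List ℕ) (n : ℕ) : power w (n + 1) = w ++ power w n := by
  simp [power, List.replicate_succ]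

lemma power_add (w : List ℕ) (m n : ℕ) : power w (m + n) = power w m ++ power w n := by
  rw [power, List.replicate_add, List.flatten_append, power, power]

lemma count_power (w : List ℕ) (n x : ℕ) : (power w n).count x = n * w.count x := by
  simp [power, List.count_flatten]

lemma mem_of_mem_power (h : x ∈ power w n) : x ∈ w := by
  obtain ⟨v, hv, hx⟩ := List.mem_flatten.1 h
  exact List.eq_of_mem_replicate hv ▸ hx

lemma power_mem_Cent (hv : v ∈ Cent u) (n : ℕ) : power v n ∈ Cent u := by
  induction n with
  | zero => simpa [power, Cent] using KEquiv.refl u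
  | succ n ih => exact power_succ v n ▸ append_mem_Cent hv ih

lemma singleton_mem_Cent_column (hu : u.Pairwise (· > ·)) (hx : x ∈ u) : [x] ∈ Cent u := by
  obtain ⟨l, m, rfl⟩ := List.append_of_mem hx
  have hl : (l ++ [x]).Pairwise (· > ·) := hu.sublist (by simp)
  have hm : (x :: m).Pairwise (· > ·) := hu.sublist (by simp)
  calc
    KEquiv (l ++ x :: m ++ [x]) (l ++ x :: x :: m) := by
      simpa using (kEquiv_cons_column_append_singleton hm le_rfl).append_left l
    KEquiv _ ([x] ++ (l ++ x :: m)) := (kEquiv_cons_column_append_cons hl m).symm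

lemma column_mem_Cent (hu : u.Pairwise (· > ·)) (hw : ∀ x ∈ w, x ∈ u) : u ∈ Cent w := by
  rw [mem_Cent_comm]
  induction w with
  | nil => simpa [Cent] using KEquiv.refl u
  | cons x w ih =>
    obtain ⟨hx, hw⟩ := List.forall_mem_cons.1 hw
    exact append_mem_Cent (singleton_mem_Cent_column hu hx) (ih hw)

lemma singleton_mem_Cent_bab (hab : a < b) : [b] ∈ Cent [b, a, b] :=
  KEquiv.k2 hab le_rfl [b]

/-! ### Row insertion -/

lemma rowInsert_cases (x : ℕ) (r : List ℕ) :
    ((∀ z ∈ r, z ≤ x) ∧ rowInsert x r = (r ++ [x], none)) ∨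
      ∃ l y m, r = l ++ y :: m ∧ (∀ z ∈ l, z ≤ x) ∧ x < y ∧
        rowInsert x r = (l ++ x :: m, some y) := by
  induction r with
  | nil => exact .inl ⟨by simp, rfl⟩
  | cons z r ih =>
    rcases lt_or_ge x z with hxz | hzx
    · exact .inr ⟨[], z, r, rfl, by simp, hxz, by simp [rowInsert, hxz]⟩
    · rcases ih with ⟨hr, h⟩ | ⟨l, y, m, rfl, hl, hxy, h⟩
      · exact .inl ⟨by simpa using ⟨hzx, hr⟩, by simp [rowInsert, hzx.not_gt, h]⟩
      · exact .inr ⟨z :: l, y, m, rfl, by simpa using ⟨hzx, hl⟩, hxy,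
          by simp [rowInsert, hzx.not_gt, h]⟩

lemma rowInsert_cons_of_lt (h : x < y) (r : List ℕ) : rowInsert x (y :: r) = (x :: r, some y) := by
  simp [rowInsert, h]

lemma rowInsert_cons_of_le (h : y ≤ x) (r : List ℕ) :
    rowInsert x (y :: r) = (y :: (rowInsert x r).1, (rowInsert x r).2) := by
  simp [rowInsert, h.not_gt]

lemma rowInsert_of_forall_le (h : ∀ z ∈ r, z ≤ x) : rowInsert x r = (r ++ [x], none) := by
  obtain ⟨-, hr⟩ | ⟨l, y, m, rfl, -, hxy, -⟩ := rowInsert_cases x r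
  · exact hr
  · exact absurd (h y (by simp)) hxy.not_ge

lemma le_of_rowInsert_eq_none (h : (rowInsert x r).2 = none) (hy : y ∈ r) : y ≤ x := by
  obtain ⟨hr, -⟩ | ⟨l, z, m, -, -, -, hz⟩ := rowInsert_cases x r
  · exact hr y hy
  · simp [hz] at h

lemma lt_of_rowInsert_eq_some (h : (rowInsert x r).2 = some y) : x < y := by
  obtain ⟨-, hr⟩ | ⟨l, z, m, -, -, hxz, hz⟩ := rowInsert_cases x r
  · simp [hr] at h
  · simp_all

lemma mem_of_rowInsert_eq_some (h : (rowInsert x r).2 = some y) : y ∈ r := by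
  obtain ⟨-, hr⟩ | ⟨l, z, m, rfl, -, -, hz⟩ := rowInsert_cases x r
  · simp [hr] at h
  · simp_all

lemma mem_rowInsert_self (x : ℕ) (r : List ℕ) : x ∈ (rowInsert x r).1 := by
  obtain ⟨-, hr⟩ | ⟨l, z, m, -, -, -, hz⟩ := rowInsert_cases x r
  · simp [hr]
  · simp [hz]

lemma mem_of_mem_rowInsert (h : y ∈ (rowInsert x r).1) : y = x ∨ y ∈ r := by
  obtain ⟨-, hr⟩ | ⟨l, z, m, rfl, -, -, hz⟩ := rowInsert_cases x r
  · simpa [hr, or_comm] using h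
  · simp only [hz, List.mem_append, List.mem_cons] at h ⊢
    tauto

lemma mem_rowInsert_or (h : y ∈ r) : y ∈ (rowInsert x r).1 ∨ (rowInsert x r).2 = some y := by
  obtain ⟨-, hr⟩ | ⟨l, z, m, rfl, -, -, hz⟩ := rowInsert_cases x r
  · simp [hr, h]
  · simp only [hz, List.mem_append, List.mem_cons, Option.some.injEq] at h ⊢
    tauto

lemma mem_rowInsert_of_le (h : y ∈ r) (hyx : y ≤ x) : y ∈ (rowInsert x r).1 :=
  (mem_rowInsert_or h).resolve_right fun h => (lt_of_rowInsert_eq_some h).not_ge hyx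

lemma rowInsert_sorted (hr : r.Pairwise (· ≤ ·)) (x : ℕ) :
    (rowInsert x r).1.Pairwise (· ≤ ·) := by
  obtain ⟨hx, h⟩ | ⟨l, y, m, rfl, hl, hxy, h⟩ := rowInsert_cases x r
  · simpa [h, List.pairwise_append] using ⟨hr, hx⟩
  · simp only [h, List.pairwise_append, List.pairwise_cons, List.forall_mem_cons] at hr ⊢
    exact ⟨hr.1, ⟨fun z hz => hxy.le.trans (hr.2.1.1 z hz), hr.2.1.2⟩,
      fun z hz => ⟨hl z hz, (hr.2.2 z hz).2⟩⟩

lemma le_of_rowInsert_eq_some (hr : r.Pairwise (· ≤ ·)) (h : (rowInsert x r).2 = some y) {z : ℕ}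
    (hz : z ∈ r) (hxz : x < z) : y ≤ z := by
  obtain ⟨-, hx⟩ | ⟨l, y', m, rfl, hl, -, hy'⟩ := rowInsert_cases x r
  · simp [hx] at h
  · obtain rfl : y' = y := by simpa [hy'] using h
    rcases List.mem_append.1 hz with hz | hz
    · exact absurd (hl z hz) hxz.not_ge
    · rcases List.mem_cons.1 hz with rfl | hz
      · exact le_rfl
      · exact List.rel_of_pairwise_cons (List.pairwise_append.1 hr).2.1 hz

lemma kEquiv_rowInsert (hr : r.Pairwise (· ≤ ·)) (x : ℕ) :
    KEquiv (r ++ [x]) ((rowInsert x r).2.toList ++ (rowInsert x r).1) := by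
  have hr' := rowInsert_sorted hr x
  obtain ⟨-, h⟩ | ⟨l, y, m, rfl, -, hxy, h⟩ := rowInsert_cases x r
  · simpa [h] using KEquiv.refl _
  · have hlx : (l ++ [x]).Pairwise (· ≤ ·) := by
      rw [h] at hr'
      exact hr'.sublist (by simp)
    have hym : (y :: m).Pairwise (· ≤ ·) := (List.pairwise_append.1 hr).2.1
    rw [h]
    calc
      KEquiv (l ++ y :: m ++ [x]) (l ++ y :: x :: m) := by
        simpa using (kEquiv_row_append_singleton hym hxy).append_left l
      KEquiv _ (y :: (l ++ x :: m)) := by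
        simpa using (kEquiv_row_append_cons hlx hxy).append_right m

/-! ### Insertion of a word into a row -/

/-- The row obtained from the row `r` by inserting the letters of a word one after the other. -/
def insertRow (r w : List ℕ) : List ℕ := w.foldl (fun r x => (rowInsert x r).1) r

/-- The word of letters bumped, in order, while a word is inserted into a row: this is the word
that gets inserted into the next row of a tableau. -/
def bumped : List ℕ → List ℕ → List ℕ
  | _, [] => []
  | r, x :: w => (rowInsert x r).2.toList ++ bumped (rowInsert x r).1 w

@[simp]
lemma insertRow_nil (r : List ℕ) : insertRow r [] = r := rfl

@[simp]
lemma bumped_nil (r : List ℕ) : bumped r [] = [] := rfl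

lemma insertRow_cons (r : List ℕ) (x : ℕ) (w : List ℕ) :
    insertRow r (x :: w) = insertRow (rowInsert x r).1 w := rfl

lemma bumped_cons (r : List ℕ) (x : ℕ) (w : List ℕ) :
    bumped r (x :: w) = (rowInsert x r).2.toList ++ bumped (rowInsert x r).1 w := rfl

lemma insertRow_append (r u v : List ℕ) :
    insertRow r (u ++ v) = insertRow (insertRow r u) v :=
  List.foldl_append

lemma bumped_append (r u v : List ℕ) :
    bumped r (u ++ v) = bumped r u ++ bumped (insertRow r u) v := by
  induction u generalizing r with
  | nil => rfl
  | cons x u ih => simp [bumped_cons, insertRow_cons, ih]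

lemma insertRow_cons_of_le (h : ∀ x ∈ w, y ≤ x) (r : List ℕ) :
    insertRow (y :: r) w = y :: insertRow r w := by
  induction w generalizing r with
  | nil => rfl
  | cons x w ih =>
    obtain ⟨hyx, hw⟩ := List.forall_mem_cons.1 h
    simp only [insertRow_cons, rowInsert_cons_of_le hyx, ih hw]

lemma bumped_cons_of_le (h : ∀ x ∈ w, y ≤ x) (r : List ℕ) :
    bumped (y :: r) w = bumped r w := by
  induction w generalizing r with
  | nil => rfl
  | cons x w ih =>
    obtain ⟨hyx, hw⟩ := List.forall_mem_cons.1 h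
    simp only [bumped_cons, rowInsert_cons_of_le hyx, ih hw]

lemma insertRow_sorted (hr : r.Pairwise (· ≤ ·)) (w : List ℕ) :
    (insertRow r w).Pairwise (· ≤ ·) := by
  induction w generalizing r with
  | nil => exact hr
  | cons x _ ih => exact ih (rowInsert_sorted hr x)

lemma length_bumped_le (r w : List ℕ) : (bumped r w).length ≤ w.length := by
  induction w generalizing r with
  | nil => rfl
  | cons x w ih =>
    have hw := ih (rowInsert x r).1
    rcases hx : (rowInsert x r).2 with _ | y <;>
      simp only [bumped_cons, hx, Option.toList_none, Option.toList_some, List.nil_append,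
        List.singleton_append, List.length_cons] <;> omega

lemma kEquiv_bumped_append_insertRow (hr : r.Pairwise (· ≤ ·)) (w : List ℕ) :
    KEquiv (r ++ w) (bumped r w ++ insertRow r w) := by
  induction w generalizing r with
  | nil => simpa using KEquiv.refl r
  | cons x w ih =>
    calc
      KEquiv (r ++ x :: w) ((rowInsert x r).2.toList ++ ((rowInsert x r).1 ++ w)) := by
        simpa using (kEquiv_rowInsert hr x).append_right w
      KEquiv _ (bumped r (x :: w) ++ insertRow r (x :: w)) := by
        simpa [bumped_cons, insertRow_cons] using
          (ih (rowInsert_sorted hr x)).append_left (rowInsert x r).2.toList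

lemma mem_of_mem_insertRow (h : y ∈ insertRow r w) : y ∈ r ∨ y ∈ w := by
  induction w generalizing r with
  | nil => exact .inl h
  | cons x w ih =>
    rcases ih h with h | h
    · rcases mem_of_mem_rowInsert h with rfl | h
      · simp
      · exact .inl h
    · simp [h]

lemma mem_insertRow_or_mem_bumped (h : y ∈ r) : y ∈ insertRow r w ∨ y ∈ bumped r w := by
  induction w generalizing r with
  | nil => exact .inl h
  | cons x w ih =>
    rw [insertRow_cons, bumped_cons]
    rcases mem_rowInsert_or (x := x) h with h | h
    · exact (ih h).imp_right (List.mem_append_right _)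
    · simp [h]

lemma mem_insertRow_of_forall_le (hy : y ∈ r) (hw : ∀ x ∈ w, y ≤ x) : y ∈ insertRow r w := by
  induction w generalizing r with
  | nil => exact hy
  | cons x w ih =>
    obtain ⟨hyx, hw⟩ := List.forall_mem_cons.1 hw
    exact ih (mem_rowInsert_of_le hy hyx) hw

lemma mem_insertRow_of_mem_sorted (hw : w.Pairwise (· ≤ ·)) (hy : y ∈ w) (r : List ℕ) :
    y ∈ insertRow r w := by
  obtain ⟨l, m, rfl⟩ := List.append_of_mem hy
  rw [insertRow_append, insertRow_cons]
  exact mem_insertRow_of_forall_le (mem_rowInsert_self _ _) fun _ =>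
    List.rel_of_pairwise_cons (List.pairwise_append.1 hw).2.1

lemma le_of_mem_bumped (hw : (x :: w).Pairwise (· ≤ ·)) (hr : ∀ z ∈ r, x < z → y ≤ z) :
    ∀ z ∈ bumped r w, y ≤ z := by
  induction w generalizing r x with
  | nil => simp
  | cons e w ih =>
    have hxe : x ≤ e := List.rel_of_pairwise_cons hw (by simp)
    intro z hz
    rcases List.mem_append.1 hz with hz | hz
    · have hz : (rowInsert e r).2 = some z := by simpa using hz
      exact hr z (mem_of_rowInsert_eq_some hz) (hxe.trans_lt (lt_of_rowInsert_eq_some hz))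
    · refine ih hw.of_cons (fun z hz hez => ?_) z hz
      rcases mem_of_mem_rowInsert hz with rfl | hz
      · exact absurd hez (lt_irrefl z)
      · exact hr z hz (hxe.trans_lt hez)

lemma bumped_sorted (hr : r.Pairwise (· ≤ ·)) (hw : w.Pairwise (· ≤ ·)) :
    (bumped r w).Pairwise (· ≤ ·) := by
  induction w generalizing r with
  | nil => simp
  | cons x w ih =>
    have hrest := ih (rowInsert_sorted hr x) hw.of_cons
    rw [bumped_cons]
    rcases hx : (rowInsert x r).2 with _ | y
    · exact hrest
    · exact hrest.cons <| le_of_mem_bumped hw fun z hz hxz =>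
        le_of_rowInsert_eq_some hr hx ((mem_of_mem_rowInsert hz).resolve_left hxz.ne') hxz

/-! ### Plactic invariance of the insertion tableau -/

lemma insertRow_k1 (hr : r.Pairwise (· ≤ ·)) (hab : a ≤ b) (hbc : b < c) :
    insertRow r [a, c, b] = insertRow r [c, a, b] := by
  have hac : a < c := by omega
  induction r with
  | nil => simp [insertRow, rowInsert, hab.not_gt, hbc, hac, hac.not_gt]
  | cons y r ih =>
    rcases le_or_gt y a with hya | hay
    · simp only [insertRow_cons_of_le (show ∀ x ∈ [a, c, b], y ≤ x by simp; omega),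
        insertRow_cons_of_le (show ∀ x ∈ [c, a, b], y ≤ x by simp; omega), ih hr.of_cons]
    · rcases le_or_gt y c with hyc | hcy
      · simp only [insertRow_cons, rowInsert_cons_of_lt hay, rowInsert_cons_of_le hac.le,
          rowInsert_cons_of_le hyc]
      · rcases r with _ | ⟨z, r⟩
        · simp [insertRow, rowInsert, hay, hcy, hab.not_gt, hbc, hac, hac.not_gt]
        · have hyz : y ≤ z := List.rel_of_pairwise_cons hr (by simp)
          simp [insertRow_cons, rowInsert_cons_of_lt, rowInsert_cons_of_le, hay, hcy, hab, hbc,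
            hac, hac.le, hcy.trans_le hyz, (hbc.trans hcy).trans_le hyz]

lemma kEquiv_bumped_k1_of_lt (hr : (y :: r).Pairwise (· ≤ ·)) (hab : a ≤ b) (hbc : b < c)
    (hcy : c < y) : KEquiv (bumped (y :: r) [a, c, b]) (bumped (y :: r) [c, a, b]) := by
  have hac : a < c := by omega
  have hay : a < y := by omega
  rcases r with _ | ⟨z, r⟩
  · simpa [bumped, rowInsert, hay, hcy, hab.not_gt, hbc, hac, hac.not_gt] using KEquiv.refl [y, c]
  · have hyz : y ≤ z := List.rel_of_pairwise_cons hr (by simp)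
    simpa [bumped, rowInsert_cons_of_lt, rowInsert_cons_of_le, hay, hcy, hab, hbc,
      hac, hac.le, hcy.trans_le hyz, (hbc.trans hcy).trans_le hyz]
      using (KEquiv.k2 hcy hyz []).symm

lemma kEquiv_bumped_k1_of_le (hr : (y :: r).Pairwise (· ≤ ·)) (hab : a ≤ b) (hbc : b < c)
    (hay : a < y) (hyc : y ≤ c) :
    KEquiv (bumped (y :: r) [a, c, b]) (bumped (y :: r) [c, a, b]) := by
  have hac : a < c := by omega
  obtain ⟨hy, hr⟩ := List.pairwise_cons.1 hr
  simp only [bumped_cons, rowInsert_cons_of_lt hay, rowInsert_cons_of_le hac.le,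
    rowInsert_cons_of_le hab, rowInsert_cons_of_le hyc]
  rcases hz : (rowInsert c r).2 with _ | z
  · simpa using KEquiv.refl _
  have hcz : c < z := lt_of_rowInsert_eq_some hz
  have hcr : c ∈ (rowInsert c r).1 := mem_rowInsert_self c r
  rcases hd : (rowInsert b (rowInsert c r).1).2 with _ | d
  · exact absurd (le_of_rowInsert_eq_none hd hcr) hbc.not_ge
  have hdc : d ≤ c := le_of_rowInsert_eq_some (rowInsert_sorted hr c) hd hcr hbc
  have hyd : y ≤ d := by
    rcases mem_of_mem_rowInsert (mem_of_rowInsert_eq_some hd) with rfl | h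
    · exact hyc
    · exact hy d h
  simpa using KEquiv.k1 hyd (hdc.trans_lt hcz) []

lemma kEquiv_bumped_k1 (hr : r.Pairwise (· ≤ ·)) (hab : a ≤ b) (hbc : b < c) :
    KEquiv (bumped r [a, c, b]) (bumped r [c, a, b]) := by
  induction r with
  | nil =>
    have hac : a < c := by omega
    simpa [bumped, rowInsert, hab.not_gt, hbc, hac, hac.not_gt] using KEquiv.refl [c]
  | cons y r ih =>
    rcases le_or_gt y a with hya | hay
    · rw [bumped_cons_of_le (by simp; omega), bumped_cons_of_le (by simp; omega)]
      exact ih hr.of_cons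
    · rcases le_or_gt y c with hyc | hcy
      · exact kEquiv_bumped_k1_of_le hr hab hbc hay hyc
      · exact kEquiv_bumped_k1_of_lt hr hab hbc hcy

lemma insertRow_k2 (hab : a < b) (hbc : b ≤ c) (r : List ℕ) :
    insertRow r [b, a, c] = insertRow r [b, c, a] := by
  have hac : a ≤ c := by omega
  induction r with
  | nil => simp [insertRow, rowInsert, hab, hbc.not_gt, hac.not_gt]
  | cons y r ih =>
    rcases le_or_gt y a with hya | hay
    · simp only [insertRow_cons_of_le (show ∀ x ∈ [b, a, c], y ≤ x by simp; omega),
        insertRow_cons_of_le (show ∀ x ∈ [b, c, a], y ≤ x by simp; omega), ih]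
    · rcases le_or_gt y b with hyb | hby
      · simp only [insertRow_cons, rowInsert_cons_of_lt hay, rowInsert_cons_of_le hyb,
          rowInsert_cons_of_le hac, rowInsert_cons_of_le (hyb.trans hbc)]
      · simp only [insertRow_cons, rowInsert_cons_of_lt hby, rowInsert_cons_of_lt hab,
          rowInsert_cons_of_le hbc, rowInsert_cons_of_le hac]

lemma kEquiv_bumped_k2 (hr : r.Pairwise (· ≤ ·)) (hab : a < b) (hbc : b ≤ c) :
    KEquiv (bumped r [b, a, c]) (bumped r [b, c, a]) := by
  have hac : a ≤ c := by omega
  induction r with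
  | nil => simpa [bumped, rowInsert, hab, hbc.not_gt, hac.not_gt] using KEquiv.refl [b]
  | cons y r ih =>
    obtain ⟨hy, hr⟩ := List.pairwise_cons.1 hr
    rcases le_or_gt y a with hya | hay
    · rw [bumped_cons_of_le (by simp; omega), bumped_cons_of_le (by simp; omega)]
      exact ih hr
    rcases lt_or_ge b y with hby | hyb
    · simp only [bumped_cons, rowInsert_cons_of_lt hby, rowInsert_cons_of_lt hab,
        rowInsert_cons_of_le hbc, rowInsert_cons_of_le hac]
      rcases hz : (rowInsert c r).2 with _ | z
      · exact KEquiv.refl _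
      · exact KEquiv.k2 hby (hy z (mem_of_rowInsert_eq_some hz)) []
    · simp only [bumped_cons, rowInsert_cons_of_lt hay, rowInsert_cons_of_le hyb,
        rowInsert_cons_of_le hac, rowInsert_cons_of_le (hyb.trans hbc)]
      rcases hd : (rowInsert c (rowInsert b r).1).2 with _ | d
      · simpa using KEquiv.refl _
      have hcd : c < d := lt_of_rowInsert_eq_some hd
      have hbd : b < d := hbc.trans_lt hcd
      have hdr : d ∈ r :=
        (mem_of_mem_rowInsert (mem_of_rowInsert_eq_some hd)).resolve_left hbd.ne'
      rcases he : (rowInsert b r).2 with _ | e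
      · exact absurd (le_of_rowInsert_eq_none he hdr) hbd.not_ge
      have hye : y < e := hyb.trans_lt (lt_of_rowInsert_eq_some he)
      have hed : e ≤ d := le_of_rowInsert_eq_some hr he hdr hbd
      exact KEquiv.k2 hye hed []

lemma insertRow_eq_of_kEquiv (h : KEquiv u v) (hr : r.Pairwise (· ≤ ·)) :
    insertRow r u = insertRow r v := by
  induction h with
  | rel u v h =>
    cases h with
    | k1 p q a b c hab hbc =>
      simp only [insertRow_append, insertRow_k1 (insertRow_sorted hr p) hab hbc]
    | k2 p q a b c hab hbc => simp only [insertRow_append, insertRow_k2 hab hbc]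
  | refl u => rfl
  | symm u v _ ih => exact ih.symm
  | trans u v w _ _ ih ih' => exact ih.trans ih'

lemma kEquiv_bumped_of_kEquiv (h : KEquiv u v) (hr : r.Pairwise (· ≤ ·)) :
    KEquiv (bumped r u) (bumped r v) := by
  induction h with
  | rel u v h =>
    have hrow := insertRow_eq_of_kEquiv (.rel _ _ h) hr
    cases h with
    | k1 p q a b c hab hbc =>
      have hp := insertRow_sorted hr p
      simp only [bumped_append, insertRow_append, insertRow_k1 hp hab hbc]
      exact ((kEquiv_bumped_k1 hp hab hbc).append_left _).append_right _
    | k2 p q a b c hab hbc =>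
      have hp := insertRow_sorted hr p
      simp only [bumped_append, insertRow_append, insertRow_k2 hab hbc]
      exact ((kEquiv_bumped_k2 hp hab hbc).append_left _).append_right _
  | refl u => exact KEquiv.refl _
  | symm u v _ ih => exact ih.symm
  | trans u v w _ _ ih ih' => exact ih.trans ih'

lemma foldl_tInsert_cons (w r : List ℕ) (T : List (List ℕ)) :
    w.foldl (fun t x => tInsert x t) (r :: T) =
      insertRow r w :: (bumped r w).foldl (fun t x => tInsert x t) T := by
  induction w generalizing r T with
  | nil => rfl
  | cons x w ih =>
    rcases h : rowInsert x r with ⟨r', _ | y⟩ <;>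
      simp [tInsert, insertRow_cons, bumped_cons, h, ih]

lemma P_of_ne_nil (hw : w ≠ []) : P w = insertRow [] w :: P (bumped [] w) := by
  rcases w with _ | ⟨x, w⟩
  · exact absurd rfl hw
  · exact foldl_tInsert_cons w [x] []

lemma row_zero (w : List ℕ) : row w 0 = insertRow [] w := by
  rcases eq_or_ne w [] with rfl | hw
  · rfl
  · simp [row, P_of_ne_nil hw]

lemma row_succ (w : List ℕ) (i : ℕ) : row w (i + 1) = row (bumped [] w) i := by
  rcases eq_or_ne w [] with rfl | hw
  · rfl
  · simp [row, P_of_ne_nil hw]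

lemma bumped_induction {motive : List ℕ → Prop} (nil : motive [])
    (bumped : ∀ w, w ≠ [] → motive (bumped [] w) → motive w) (w : List ℕ) : motive w := by
  induction hn : w.length using Nat.strong_induction_on generalizing w with
  | _ n ih =>
    subst hn
    rcases w with _ | ⟨x, w⟩
    · exact nil
    · exact bumped _ (by simp) (ih _ (Nat.lt_succ_of_le (length_bumped_le [x] w)) _ rfl)

lemma KEquiv.P_eq (h : KEquiv u v) : P u = P v := by
  induction u using bumped_induction generalizing v with
  | nil => rw [h.perm.nil_eq]
  | bumped u hu ih =>
    have hv : v ≠ [] := by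
      rintro rfl
      exact hu h.perm.eq_nil
    rw [P_of_ne_nil hu, P_of_ne_nil hv, insertRow_eq_of_kEquiv h .nil,
      ih (kEquiv_bumped_of_kEquiv h .nil)]

lemma KEquiv.row_eq (h : KEquiv u v) (i : ℕ) : row u i = row v i := by
  rw [row, row, h.P_eq]

/-! ### Tableaux and their reading words -/

/-- The row `r` can sit on top of the row `s` in a tableau: `s` is at most as long as `r` and each
of its entries is larger than the entry of `r` above it. -/
inductive RowDominates : List ℕ → List ℕ → Prop
  | nil (r : List ℕ) : RowDominates r []
  | cons {x y : ℕ} {r s : List ℕ} : x < y → RowDominates r s → RowDominates (x :: r) (y :: s)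

/-- Semistandard Young tableaux, as lists of rows from top to bottom. Trailing empty rows are
allowed, so that deleting the first column of a tableau leaves a tableau. -/
def IsTableau : List (List ℕ) → Prop
  | [] => True
  | r :: T => r.Pairwise (· ≤ ·) ∧ RowDominates r (T.headD []) ∧ IsTableau T

/-- The row reading word of a tableau: its rows from bottom to top, each from left to right. -/
def readingWord (T : List (List ℕ)) : List ℕ := T.reverse.flatten

namespace RowDominates

lemma exists_lt (h : RowDominates r s) (hy : y ∈ s) : ∃ x ∈ r, x < y := by
  induction h with
  | nil => simp at hy
  | cons hxz _ ih =>
    rcases List.mem_cons.1 hy with rfl | hy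
    · exact ⟨_, by simp, hxz⟩
    · obtain ⟨x, hx, hxy⟩ := ih hy
      exact ⟨x, by simp [hx], hxy⟩

lemma exists_getElem?_lt (h : RowDominates r s) (hy : s[j]? = some y) :
    ∃ x, r[j]? = some x ∧ x < y := by
  induction h generalizing j with
  | nil => simp at hy
  | @cons x z r s hxz _ ih =>
    rcases j with _ | j
    · obtain rfl : z = y := by simpa using hy
      exact ⟨x, rfl, hxz⟩
    · exact ih (by simpa using hy)

lemma eq_nil (h : RowDominates [] s) : s = [] := by
  cases h
  rfl

lemma tail (h : RowDominates r s) : RowDominates r.tail s.tail := by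
  cases h with
  | nil => exact .nil _
  | cons _ h => exact h

lemma rowInsert_left (h : RowDominates r s) (x : ℕ) : RowDominates (rowInsert x r).1 s := by
  induction h with
  | nil => exact .nil _
  | @cons y z r s hyz h ih =>
    rcases lt_or_ge x y with hxy | hyx
    · rw [rowInsert_cons_of_lt hxy]
      exact .cons (hxy.trans hyz) h
    · rw [rowInsert_cons_of_le hyx]
      exact .cons hyz ih

lemma rowInsert (h : RowDominates r s) (hy : (rowInsert x r).2 = some y) :
    RowDominates (rowInsert x r).1 (rowInsert y s).1 := by
  induction r generalizing s with
  | nil => simp [Plactic.rowInsert] at hy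
  | cons c r ih =>
    rcases lt_or_ge x c with hxc | hcx
    · rw [rowInsert_cons_of_lt hxc] at hy ⊢
      obtain rfl : c = y := by simpa using hy
      cases h with
      | nil => exact .cons hxc (.nil _)
      | cons hcd h => simpa [rowInsert_cons_of_lt hcd] using h.cons hxc
    · rw [rowInsert_cons_of_le hcx] at hy ⊢
      have hcy : c < y := hcx.trans_lt (lt_of_rowInsert_eq_some hy)
      cases h with
      | nil => exact .cons hcy (.nil _)
      | @cons _ d _ s hcd h =>
        rcases lt_or_ge y d with hyd | hdy
        · rw [rowInsert_cons_of_lt hyd]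
          exact .cons hcy (h.rowInsert_left x)
        · rw [rowInsert_cons_of_le hdy]
          exact .cons hcd (ih h hy)

lemma insertRow_bumped (h : RowDominates r s) (w : List ℕ) :
    RowDominates (insertRow r w) (insertRow s (bumped r w)) := by
  induction w generalizing r s with
  | nil => exact h
  | cons x w ih =>
    rw [insertRow_cons, bumped_cons, insertRow_append]
    rcases hx : (Plactic.rowInsert x r).2 with _ | y
    · exact ih (h.rowInsert_left x)
    · exact ih (h.rowInsert hx)

end RowDominates

lemma headD_P (w : List ℕ) : (P w).headD [] = row w 0 := by
  rw [row, List.getD_eq_getElem?_getD, List.headD_eq_head?_getD, List.head?_eq_getElem?]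

lemma headD_tail_P (w : List ℕ) : (P w).tail.headD [] = row w 1 := by
  rw [row, List.getD_eq_getElem?_getD, List.headD_eq_head?_getD, List.head?_tail]

lemma isTableau_P (w : List ℕ) : IsTableau (P w) := by
  induction w using bumped_induction with
  | nil => trivial
  | bumped w hw ih =>
    rw [P_of_ne_nil hw]
    refine ⟨insertRow_sorted .nil w, ?_, ih⟩
    rw [headD_P, row_zero]
    exact (RowDominates.nil []).insertRow_bumped w

lemma kEquiv_readingWord_P (w : List ℕ) : KEquiv w (readingWord (P w)) := by
  induction w using bumped_induction with
  | nil => rfl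
  | bumped w hw ih =>
    calc
      KEquiv w (bumped [] w ++ insertRow [] w) := kEquiv_bumped_append_insertRow .nil w
      KEquiv _ (readingWord (P w)) := by
        simpa [P_of_ne_nil hw, readingWord] using ih.append_right (insertRow [] w)

/-! ### Columns -/

variable {T : List (List ℕ)}

lemma col_succ (T : List (List ℕ)) (j : ℕ) : col T (j + 1) = col (T.map List.tail) j := by
  simp [col, List.filterMap_map]

lemma col_eq_cons (h : (T.headD [])[j]? = some x) : col T j = x :: col T.tail j := by
  cases T with
  | nil => simp at h
  | cons r T => exact List.filterMap_cons_some h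

lemma kEquiv_row_append_column (hr : (x :: r).Pairwise (· ≤ ·)) (hu : (x :: u).Pairwise (· > ·)) :
    KEquiv (x :: r ++ u) (x :: u ++ r) := by
  induction u generalizing x with
  | nil => simpa using KEquiv.refl (x :: r)
  | cons d u ih =>
    obtain ⟨hrx, hr⟩ := List.pairwise_cons.1 hr
    obtain ⟨hux, hu⟩ := List.pairwise_cons.1 hu
    have hdx : d < x := hux d (by simp)
    have hdr : (d :: r).Pairwise (· ≤ ·) := hr.cons fun z hz => hdx.le.trans (hrx z hz)
    calc
      KEquiv (x :: r ++ d :: u) (x :: d :: r ++ u) := by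
        simpa using (kEquiv_row_append_singleton (hr.cons hrx) hdx).append_right u
      KEquiv _ (x :: d :: u ++ r) := (ih hdr hu).cons x

namespace IsTableau

lemma tail (hT : IsTableau T) : IsTableau T.tail := by
  cases T with
  | nil => trivial
  | cons r T => exact hT.2.2

lemma rowDominates (hT : IsTableau T) : RowDominates (T.headD []) (T.tail.headD []) := by
  cases T with
  | nil => exact .nil _
  | cons r T => exact hT.2.1

lemma map_tail (hT : IsTableau T) : IsTableau (T.map List.tail) := by
  induction T with
  | nil => trivial
  | cons r T ih =>
    obtain ⟨hr, hrT, hT⟩ := hT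
    refine ⟨hr.tail, ?_, ih hT⟩
    cases T <;> exact hrT.tail

lemma readingWord_eq_nil (hT : IsTableau T) (h : T.headD [] = []) : readingWord T = [] := by
  induction T with
  | nil => rfl
  | cons r T ih =>
    obtain rfl : r = [] := h
    simpa [readingWord] using ih hT.tail hT.rowDominates.eq_nil

lemma col_eq_nil (hT : IsTableau T) (h : (T.headD [])[j]? = none) : col T j = [] := by
  induction T with
  | nil => rfl
  | cons r T ih =>
    have hTj : (T.headD [])[j]? = none := by
      refine Option.eq_none_iff_forall_ne_some.2 fun y hy => ?_
      obtain ⟨x, hx, -⟩ := hT.rowDominates.exists_getElem?_lt hy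
      exact Option.some_ne_none x (hx.symm.trans h)
    have hcol : col (r :: T) j = col T j := List.filterMap_cons_none h
    rw [hcol, ih hT.tail hTj]

lemma col_sorted (hT : IsTableau T) (j : ℕ) : (col T j).Pairwise (· < ·) := by
  induction T with
  | nil => exact .nil
  | cons r T ih =>
    have hcol := ih hT.tail
    rcases hx : r[j]? with _ | x
    · rw [hT.col_eq_nil hx]
      exact .nil
    rw [col_eq_cons (T := r :: T) hx, List.tail_cons]
    rcases hy : (T.headD [])[j]? with _ | y
    · rw [show col T j = [] from hT.tail.col_eq_nil hy]
      exact List.pairwise_singleton _ x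
    · obtain ⟨x', hx', hxy⟩ := hT.rowDominates.exists_getElem?_lt hy
      obtain rfl : x = x' := Option.some.inj (hx.symm.trans hx')
      rw [col_eq_cons hy] at hcol ⊢
      exact hcol.cons_cons_of_trans hxy

@[elab_as_elim]
lemma induction_columns {motive : ∀ T, IsTableau T → Prop}
    (nil : ∀ T (hT : IsTableau T), T.headD [] = [] → motive T hT)
    (cons : ∀ x r T (hT : IsTableau ((x :: r) :: T)),
      motive (r :: T.map List.tail) hT.map_tail → motive ((x :: r) :: T) hT)
    (hT : IsTableau T) : motive T hT := by
  induction hr : T.headD [] generalizing T with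
  | nil => exact nil T hT hr
  | cons x r ih =>
    rcases T with _ | ⟨r', T⟩
    · exact absurd hr (List.cons_ne_nil x r).symm
    · obtain rfl : r' = x :: r := hr
      exact cons x r T hT (ih hT.map_tail rfl)

-- `u` is the part of the first column that lies above `T`, moved past the rows read so far.
lemma kEquiv_append_column (hT : IsTableau T) (hu : u.Pairwise (· > ·))
    (hlt : ∀ d ∈ u, ∀ y ∈ T.headD [], d < y) :
    KEquiv (readingWord T ++ u) ((col T 0).reverse ++ u ++ readingWord (T.map List.tail)) := by
  induction T generalizing u with
  | nil => simpa [readingWord, col] using KEquiv.refl u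
  | cons r T ih =>
    obtain ⟨hr, hrT, hT⟩ := hT
    rcases r with _ | ⟨x, r⟩
    · have hTu := ih hT hu (by rw [hrT.eq_nil]; simp)
      simpa [readingWord, col] using hTu
    · have hxu : (x :: u).Pairwise (· > ·) := hu.cons fun d hd => hlt d hd x (by simp)
      have hxT : ∀ y ∈ T.headD [], x < y := by
        intro y hy
        obtain ⟨e, he, hey⟩ := hrT.exists_lt hy
        rcases List.mem_cons.1 he with rfl | he
        · exact hey
        · exact (List.rel_of_pairwise_cons hr he).trans_lt hey
      have hltT : ∀ d ∈ x :: u, ∀ y ∈ T.headD [], d < y := by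
        intro d hd y hy
        rcases List.mem_cons.1 hd with rfl | hd
        · exact hxT y hy
        · exact (hlt d hd x (by simp)).trans (hxT y hy)
      calc
        KEquiv (readingWord ((x :: r) :: T) ++ u) (readingWord T ++ x :: u ++ r) := by
          simpa [readingWord] using
            (kEquiv_row_append_column hr hxu).append_left (readingWord T)
        KEquiv _ ((col ((x :: r) :: T) 0).reverse ++ u ++
            readingWord (((x :: r) :: T).map List.tail)) := by
          simpa [readingWord, col] using (ih hT hxu hltT).append_right r

lemma kEquiv_column (hT : IsTableau T) :
    KEquiv (readingWord T) ((col T 0).reverse ++ readingWord (T.map List.tail)) := by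
  simpa using hT.kEquiv_append_column (u := []) .nil (by simp)

lemma readingWord_mem_Cent (hT : IsTableau T) (hcol : ∀ j, (col T j).reverse ∈ Cent u) :
    readingWord T ∈ Cent u := by
  induction hT using induction_columns with
  | nil T hT h => simpa [hT.readingWord_eq_nil h, Cent] using KEquiv.refl u
  | cons x r T hT ih =>
    exact mem_Cent_of_kEquiv hT.kEquiv_column
      (append_mem_Cent (hcol 0) (ih fun j => by simpa [col_succ] using hcol (j + 1)))

lemma count_readingWord (hT : IsTableau T) (t : ℕ) :
    (readingWord T).count t = (col T 0).count t + (readingWord (T.map List.tail)).count t := by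
  rw [hT.kEquiv_column.perm.count_eq, List.count_append, List.count_reverse]

lemma count_col_le (hT : IsTableau T) (hx : (T.headD [])[j]? = some x) (t : ℕ) :
    (col T j).count t ≤ if x ≤ t then 1 else 0 := by
  have hcol := hT.col_sorted j
  split_ifs with hxt
  · exact List.nodup_iff_count_le_one.1 hcol.nodup t
  · rw [col_eq_cons hx] at hcol ⊢
    refine (List.count_eq_zero.2 fun ht => ?_).le
    rcases List.mem_cons.1 ht with rfl | ht
    · exact hxt le_rfl
    · exact hxt (List.rel_of_pairwise_cons hcol ht).le

lemma count_readingWord_le (hT : IsTableau T) (t : ℕ) :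
    (readingWord T).count t ≤ (T.headD []).countP (· ≤ t) := by
  induction hT using induction_columns with
  | nil T hT h => simp [hT.readingWord_eq_nil h]
  | cons x r T hT ih =>
    have hcol := hT.count_col_le (j := 0) (x := x) rfl t
    rw [hT.count_readingWord]
    simp only [List.headD_cons, List.countP_cons, decide_eq_true_eq, List.map_cons,
      List.tail_cons] at ih ⊢
    omega

lemma mem_col_of_countP_le_count (hT : IsTableau T)
    (h : (T.headD []).countP (· ≤ t) ≤ (readingWord T).count t)
    (hx : (T.headD [])[j]? = some x) (hxt : x ≤ t) : t ∈ col T j := by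
  induction hT using induction_columns generalizing j with
  | nil T _ hnil =>
    rw [hnil] at hx
    simp at hx
  | cons y r T hT ih =>
    have hcol := hT.count_col_le (j := 0) (x := y) rfl t
    have hrest := hT.map_tail.count_readingWord_le t
    rw [hT.count_readingWord] at h
    simp only [List.headD_cons, List.countP_cons, decide_eq_true_eq, List.map_cons,
      List.tail_cons] at hx h hrest ih hcol
    rcases j with _ | j
    · obtain rfl : y = x := by simpa using hx
      rw [if_pos hxt] at h
      exact List.count_pos_iff.1 (by omega)
    · rw [col_succ]
      exact ih (by omega) (by simpa using hx)

end IsTableau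

/-! ### The first two rows of a product -/

lemma row_append_zero (v w : List ℕ) : row (v ++ w) 0 = insertRow (row v 0) w := by
  rw [row_zero, row_zero, insertRow_append]

lemma row_append_one (v w : List ℕ) :
    row (v ++ w) 1 = insertRow (row v 1) (bumped (row v 0) w) := by
  rw [row_succ, row_succ, row_zero, row_zero, row_zero, bumped_append, insertRow_append]

lemma row_sorted (w : List ℕ) (i : ℕ) : (row w i).Pairwise (· ≤ ·) := by
  induction i generalizing w with
  | zero => exact row_zero w ▸ insertRow_sorted .nil w
  | succ i ih => exact row_succ w i ▸ ih (bumped [] w)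

lemma exists_kEquiv_append_row_zero (w : List ℕ) : ∃ v, KEquiv w (v ++ row w 0) :=
  ⟨bumped [] w, row_zero w ▸ kEquiv_bumped_append_insertRow .nil w⟩

lemma exists_kEquiv_append_row_one_append_row_zero (w : List ℕ) :
    ∃ v, KEquiv w (v ++ row w 1 ++ row w 0) := by
  obtain ⟨v, hv⟩ := exists_kEquiv_append_row_zero (bumped [] w)
  refine ⟨v, ?_⟩
  calc
    KEquiv w (bumped [] w ++ row w 0) := row_zero w ▸ kEquiv_bumped_append_insertRow .nil w
    KEquiv _ (v ++ row w 1 ++ row w 0) := (row_succ w 0 ▸ hv).append_right _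

lemma mem_row_zero_append (hy : y ∈ row w 0) (v : List ℕ) : y ∈ row (v ++ w) 0 := by
  obtain ⟨u, hu⟩ := exists_kEquiv_append_row_zero w
  rw [(hu.append_left v).row_eq, ← List.append_assoc, row_append_zero]
  exact mem_insertRow_of_mem_sorted (row_sorted w 0) hy _

lemma mem_row_zero_or_one_append (hy : y ∈ row w 1) (v : List ℕ) :
    y ∈ row (v ++ w) 0 ∨ y ∈ row (v ++ w) 1 := by
  obtain ⟨u, hu⟩ := exists_kEquiv_append_row_one_append_row_zero w
  have huv : KEquiv (v ++ w) (v ++ u ++ row w 1 ++ row w 0) := by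
    simpa using hu.append_left v
  have hy0 : y ∈ row (v ++ u ++ row w 1) 0 := by
    rw [row_append_zero]
    exact mem_insertRow_of_mem_sorted (row_sorted w 1) hy _
  rw [huv.row_eq, huv.row_eq, row_append_zero, row_append_one]
  exact (mem_insertRow_or_mem_bumped hy0).imp_right fun hy1 =>
    mem_insertRow_of_mem_sorted (bumped_sorted (row_sorted _ 0) (row_sorted w 0)) hy1 _

/-! ### Counting letters in a row -/

section Flush

-- In a sorted row the entries satisfying `p` form the block following the entries `≤ t`, so that
-- each inserted `t` bumps an entry of that block as long as there is one.
variable {p : ℕ → Prop}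

lemma countP_rowInsert_le [DecidablePred p] (hpt : ∀ z, p z → t < z)
    (hp : ∀ y z, t < y → y ≤ z → p z → p y) (hr : r.Pairwise (· ≤ ·)) (hx : ¬p x) :
    (rowInsert x r).1.countP (p ·) ≤ r.countP (p ·) - if x = t then 1 else 0 := by
  obtain ⟨hrx, h⟩ | ⟨l, y, m, rfl, hl, hxy, h⟩ := rowInsert_cases x r
  · rw [h]
    split_ifs with hxt
    · subst hxt
      have hr0 : r.countP (p ·) = 0 :=
        List.countP_eq_zero.2 fun z hz => by simpa using fun hpz => (hrx z hz).not_gt (hpt z hpz)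
      simp [hr0, hx]
    · simp [hx]
  · rw [h]
    by_cases hpy : p y
    · simp only [List.countP_append, List.countP_cons, hx, hpy, decide_true, decide_false,
        if_true, if_false, Bool.false_eq_true]
      split_ifs <;> omega
    · split_ifs with hxt
      · subst hxt
        have hym : ∀ z ∈ m, y ≤ z := fun z =>
          List.rel_of_pairwise_cons (List.pairwise_append.1 hr).2.1
        have hm : m.countP (p ·) = 0 := List.countP_eq_zero.2 fun z hz => by
          simpa using fun hpz => hpy (hp y z hxy (hym z hz) hpz)
        have hl : l.countP (p ·) = 0 :=
          List.countP_eq_zero.2 fun z hz => by simpa using fun hpz => (hl z hz).not_gt (hpt z hpz)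
        simp [hx, hm, hl]
      · simp [hx, hpy]

lemma countP_insertRow_le [DecidablePred p] (hpt : ∀ z, p z → t < z)
    (hp : ∀ y z, t < y → y ≤ z → p z → p y) (hr : r.Pairwise (· ≤ ·)) (hw : ∀ x ∈ w, ¬p x) :
    (insertRow r w).countP (p ·) ≤ r.countP (p ·) - w.count t := by
  induction w generalizing r with
  | nil => simp
  | cons x w ih =>
    obtain ⟨hx, hw⟩ := List.forall_mem_cons.1 hw
    have hrow := ih (rowInsert_sorted hr x) hw
    have hone := countP_rowInsert_le hpt hp hr hx
    rw [insertRow_cons, List.count_cons]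
    simp only [beq_iff_eq]
    omega

lemma not_of_mem_insertRow (hpt : ∀ z, p z → t < z) (hp : ∀ y z, t < y → y ≤ z → p z → p y)
    (hr : r.Pairwise (· ≤ ·)) (hw : ∀ x ∈ w, ¬p x) (hlen : r.length ≤ w.count t) :
    ∀ z ∈ insertRow r w, ¬p z := by
  classical
  have hcount : (insertRow r w).countP (p ·) = 0 := by
    have hle := countP_insertRow_le hpt hp hr hw
    have hlen' : r.countP (p ·) ≤ r.length := List.countP_le_length
    omega
  simpa using List.countP_eq_zero.1 hcount

end Flush

lemma countP_le_rowInsert (r : List ℕ) (x t : ℕ) :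
    r.countP (· ≤ t) + (if x = t then 1 else 0) ≤ (rowInsert x r).1.countP (· ≤ t) := by
  obtain ⟨-, h⟩ | ⟨l, y, m, rfl, -, hxy, h⟩ := rowInsert_cases x r <;>
    simp only [h, List.countP_append, List.countP_cons, List.countP_nil, decide_eq_true_eq] <;>
    split_ifs <;> omega

lemma countP_le_insertRow (r w : List ℕ) (t : ℕ) :
    r.countP (· ≤ t) + w.count t ≤ (insertRow r w).countP (· ≤ t) := by
  induction w generalizing r with
  | nil => simp
  | cons x w ih =>
    have hrow := ih (rowInsert x r).1
    have hone := countP_le_rowInsert r x t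
    rw [insertRow_cons, List.count_cons]
    simp only [beq_iff_eq]
    omega

lemma countP_rowInsert_le_of_mem (hr : r.Pairwise (· ≤ ·)) (ht : t ∈ r) (x : ℕ) :
    (rowInsert x r).1.countP (· ≤ t) ≤ r.countP (· ≤ t) + if x = t then 1 else 0 := by
  obtain ⟨hx, h⟩ | ⟨l, y, m, rfl, -, hxy, h⟩ := rowInsert_cases x r
  · have htx : t ≤ x := hx t ht
    simp only [h, List.countP_append, List.countP_cons, List.countP_nil, decide_eq_true_eq]
    split_ifs <;> omega
  · have hyt : x < t → y ≤ t := le_of_rowInsert_eq_some hr (by rw [h]) ht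
    simp only [h, List.countP_append, List.countP_cons, decide_eq_true_eq]
    split_ifs <;> omega

lemma count_le_count_rowInsert_add_one (r : List ℕ) (x t : ℕ) :
    r.count t ≤ (rowInsert x r).1.count t + 1 := by
  obtain ⟨-, h⟩ | ⟨l, y, m, rfl, -, -, h⟩ := rowInsert_cases x r <;>
    simp only [h, List.count_append, List.count_cons] <;> split_ifs <;> omega

lemma countP_insertRow_le_of_length_le (hr : r.Pairwise (· ≤ ·))
    (hw : w.length ≤ r.count t) :
    (insertRow r w).countP (· ≤ t) ≤ r.countP (· ≤ t) + w.count t := by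
  induction w generalizing r with
  | nil => simp
  | cons x w ih =>
    rw [List.length_cons] at hw
    have hcount := count_le_count_rowInsert_add_one r x t
    have hrow := ih (rowInsert_sorted hr x) (by omega)
    have hone := countP_rowInsert_le_of_mem hr (List.count_pos_iff.1 (by omega)) x (t := t)
    rw [insertRow_cons, List.count_cons]
    simp only [beq_iff_eq]
    omega

lemma countP_row_zero_le_count (hw : w ∈ Cent v)
    (hv : (row v 0).countP (· ≤ t) ≤ v.count t) (hlen : w.length ≤ (row v 0).count t) :
    (row w 0).countP (· ≤ t) ≤ w.count t := by
  have hrow : insertRow (row v 0) w = insertRow (row w 0) v := by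
    rw [← row_append_zero, ← row_append_zero, KEquiv.row_eq hw]
  have hupper := countP_insertRow_le_of_length_le (row_sorted v 0) hlen
  have hlower := countP_le_insertRow (row w 0) v t
  rw [hrow] at hupper
  omega

/-! ### Powers of `bab` -/

lemma count_power_left (hab : a < b) (n : ℕ) : (power [b, a, b] n).count a = n := by
  simp [count_power, hab.ne']

lemma count_power_right (hab : a < b) (n : ℕ) : (power [b, a, b] n).count b = 2 * n := by
  simp [count_power, hab.ne, mul_comm]

lemma insertRow_append_of_le (h : ∀ x ∈ w, ∀ y ∈ s, y ≤ x) (r : List ℕ) :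
    insertRow (s ++ r) w = s ++ insertRow r w := by
  induction s with
  | nil => rfl
  | cons y s ih =>
    rw [List.cons_append, insertRow_cons_of_le fun x hx => h x hx y (by simp),
      ih fun x hx z hz => h x hx z (by simp [hz]), List.cons_append]

lemma row_power_zero (hab : a < b) (n : ℕ) :
    row (power [b, a, b] n) 0 = List.replicate n a ++ List.replicate n b := by
  induction n with
  | zero => rfl
  | succ n ih =>
    have hb : insertRow (List.replicate n b) [b, a, b] = a :: List.replicate (n + 1) b := by
      have hb' : rowInsert b (List.replicate n b) = (List.replicate (n + 1) b, none) := by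
        rw [rowInsert_of_forall_le (by simp +contextual), ← List.replicate_succ']
      rw [insertRow_cons, hb', List.replicate_succ, insertRow_cons, rowInsert_cons_of_lt hab,
        insertRow_cons, rowInsert_cons_of_le hab.le, hb', insertRow_nil,
        List.replicate_succ]
    have hle : ∀ x ∈ [b, a, b], ∀ y ∈ List.replicate n a, y ≤ x := by
      simp +contextual [hab.le]
    rw [power_add, row_append_zero, ih]
    simp only [power, List.replicate_one, List.flatten_singleton]
    rw [insertRow_append_of_le hle, hb, List.replicate_succ' (n := n) (a := a)]
    simp

lemma countP_row_zero_le (hab : a < b) (hw : w ∈ Cent [b, a, b]) :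
    (row w 0).countP (· ≤ a) ≤ w.count a ∧ (row w 0).countP (· ≤ b) ≤ w.count b := by
  have hcomm : w ∈ Cent (power [b, a, b] w.length) :=
    mem_Cent_comm.1 (power_mem_Cent (mem_Cent_comm.1 hw) w.length)
  constructor <;> refine countP_row_zero_le_count hcomm ?_ ?_ <;>
    simp [row_power_zero hab, count_power_left hab, count_power_right hab, List.countP_replicate,
      List.count_replicate, hab, hab.le, hab.ne, hab.ne', two_mul]

lemma eq_or_eq_of_mem_power (hx : x ∈ power [b, a, b] n) : x = a ∨ x = b := by
  have hx : x = b ∨ x = a ∨ x = b := by simpa using mem_of_mem_power hx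
  tauto

lemma le_or_eq_of_mem_insertRow (hr : ∀ z ∈ r, z ≤ a ∨ z = b) (hw : ∀ x ∈ w, x = a ∨ x = b) :
    ∀ z ∈ insertRow r w, z ≤ a ∨ z = b := fun z hz =>
  (mem_of_mem_insertRow hz).elim (hr z) fun hz => (hw z hz).imp_left Eq.le

lemma bumped_bab (hab : a < b) (hr : ∀ z ∈ r, z ≤ a ∨ z = b) : bumped r [b, a, b] = [b] := by
  have hrb : ∀ z ∈ r, z ≤ b := fun z hz => (hr z hz).elim (fun h => h.trans hab.le) Eq.le
  have hfirst : rowInsert b r = (r ++ [b], none) := rowInsert_of_forall_le hrb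
  have hsecond : (rowInsert a (r ++ [b])).2 = some b := by
    rcases h : (rowInsert a (r ++ [b])).2 with _ | y
    · exact absurd (le_of_rowInsert_eq_none h (by simp)) hab.not_ge
    · have hay : a < y := lt_of_rowInsert_eq_some h
      have hy : y ∈ r ∨ y = b := by simpa using mem_of_rowInsert_eq_some h
      rw [hy.elim (fun hy => (hr y hy).resolve_left hay.not_ge) id]
  have hthird : ∀ z ∈ (rowInsert a (r ++ [b])).1, z ≤ b := by
    intro z hz
    rcases mem_of_mem_rowInsert hz with rfl | hz
    · exact hab.le
    · have hz : z ∈ r ∨ z = b := by simpa using hz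
      exact hz.elim (hrb z) Eq.le
  simp [bumped_cons, hfirst, hsecond, rowInsert_of_forall_le hthird]

lemma bumped_power_bab (hab : a < b) (hr : ∀ z ∈ r, z ≤ a ∨ z = b) (n : ℕ) :
    bumped r (power [b, a, b] n) = List.replicate n b := by
  induction n generalizing r with
  | zero => rfl
  | succ n ih =>
    rw [power_succ, bumped_append, bumped_bab hab hr,
      ih (le_or_eq_of_mem_insertRow hr (by simp)),
      List.replicate_succ, List.singleton_append]

lemma le_or_eq_of_mem_insertRow_power (hab : a < b) (hr : r.Pairwise (· ≤ ·)) :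
    ∀ z ∈ insertRow r (power [b, a, b] r.length), z ≤ a ∨ z = b := by
  have hbetween := not_of_mem_insertRow (p := fun z => a < z ∧ z < b) (t := a)
    (w := power [b, a, b] r.length) (fun z hz => hz.1)
    (fun y z hay hyz hz => ⟨hay, hyz.trans_lt hz.2⟩) hr
    (fun x hx => by rcases eq_or_eq_of_mem_power hx with rfl | rfl <;> simp)
    (count_power_left hab _).ge
  have habove := not_of_mem_insertRow (p := (b < ·)) (t := b)
    (w := power [b, a, b] r.length) (fun z hz => hz) (fun y z hby _ _ => hby) hr
    (fun x hx => by rcases eq_or_eq_of_mem_power hx with rfl | rfl <;> simp [hab.le])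
    (by rw [count_power_right hab]; omega)
  intro z hz
  have hza := hbetween z hz
  have hzb := habove z hz
  omega

lemma le_of_mem_insertRow_replicate (hr : r.Pairwise (· ≤ ·)) (b : ℕ) :
    ∀ z ∈ insertRow r (List.replicate r.length b), z ≤ b := by
  have habove := not_of_mem_insertRow (p := (b < ·)) (t := b)
    (w := List.replicate r.length b) (fun z hz => hz) (fun y z hby _ _ => hby) hr
    (by simp) (by simp)
  simpa using habove

lemma exists_row_append_power (hab : a < b) (w : List ℕ) :
    ∃ n, (∀ y ∈ row (w ++ power [b, a, b] n) 0, y ≤ a ∨ y = b) ∧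
      ∀ y ∈ row (w ++ power [b, a, b] n) 1, y ≤ b := by
  set v := w ++ power [b, a, b] (row w 0).length with hv
  have hrow : ∀ y ∈ row v 0, y ≤ a ∨ y = b := by
    rw [hv, row_append_zero]
    exact le_or_eq_of_mem_insertRow_power hab (row_sorted w 0)
  refine ⟨(row w 0).length + (row v 1).length, ?_, ?_⟩ <;>
    rw [power_add, ← List.append_assoc, ← hv]
  · rw [row_append_zero]
    exact le_or_eq_of_mem_insertRow hrow fun x => eq_or_eq_of_mem_power
  · rw [row_append_one, bumped_power_bab hab hrow]
    exact le_of_mem_insertRow_replicate (row_sorted v 1) b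

lemma le_or_eq_of_mem_row_zero (hab : a < b) (hw : w ∈ Cent [b, a, b]) (hy : y ∈ row w 0) :
    y ≤ a ∨ y = b := by
  obtain ⟨n, hrow, -⟩ := exists_row_append_power hab w
  have hcomm := mem_Cent_comm.1 (power_mem_Cent (mem_Cent_comm.1 hw) n)
  exact hrow y (hcomm.row_eq 0 ▸ mem_row_zero_append hy _)

lemma le_of_mem_row_one (hab : a < b) (hw : w ∈ Cent [b, a, b]) (hy : y ∈ row w 1) : y ≤ b := by
  obtain ⟨n, hrow, hrow'⟩ := exists_row_append_power hab w
  have hcomm := mem_Cent_comm.1 (power_mem_Cent (mem_Cent_comm.1 hw) n)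
  rcases mem_row_zero_or_one_append hy (power [b, a, b] n) with h | h
  · exact (hrow y (hcomm.row_eq 0 ▸ h)).elim (fun h => h.trans hab.le) Eq.le
  · exact hrow' y (hcomm.row_eq 1 ▸ h)

/-! ### The centralizer of `bab` -/

lemma mem_col_P_of_le (hab : a < b) (hw : w ∈ Cent [b, a, b])
    (hx : (row w 0)[j]? = some x) (hxa : x ≤ a) : a ∈ col (P w) j ∧ b ∈ col (P w) j := by
  obtain ⟨hwa, hwb⟩ := countP_row_zero_le hab hw
  rw [← headD_P] at hx hwa hwb
  rw [(kEquiv_readingWord_P w).perm.count_eq] at hwa hwb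
  exact ⟨(isTableau_P w).mem_col_of_countP_le_count hwa hx hxa,
    (isTableau_P w).mem_col_of_countP_le_count hwb hx (hxa.trans hab.le)⟩

lemma col_P_eq_singleton (hab : a < b) (hw : w ∈ Cent [b, a, b])
    (hx : (row w 0)[j]? = some b) : col (P w) j = [b] := by
  have hT := isTableau_P w
  rw [← headD_P] at hx
  rw [col_eq_cons hx]
  rcases hy : ((P w).tail.headD [])[j]? with _ | y
  · rw [hT.tail.col_eq_nil hy]
  · obtain ⟨x, hx', hxy⟩ := hT.rowDominates.exists_getElem?_lt hy
    obtain rfl : b = x := Option.some.inj (hx.symm.trans hx')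
    have hyb : y ≤ b := le_of_mem_row_one hab hw (headD_tail_P w ▸ List.mem_of_getElem? hy)
    exact absurd hxy hyb.not_gt

theorem mem_Cent_bab_iff (hab : a < b) :
    w ∈ Cent [b, a, b] ↔
      ∀ j, col (P w) j = [] ∨ col (P w) j = [b] ∨ a ∈ col (P w) j ∧ b ∈ col (P w) j := by
  have hT := isTableau_P w
  refine ⟨fun hw j => ?_, fun hcol => ?_⟩
  · rcases hx : (row w 0)[j]? with _ | x
    · exact .inl (hT.col_eq_nil (headD_P w ▸ hx))
    · rcases le_or_eq_of_mem_row_zero hab hw (List.mem_of_getElem? hx) with hxa | rfl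
      · exact .inr (.inr (mem_col_P_of_le hab hw hx hxa))
      · exact .inr (.inl (col_P_eq_singleton hab hw hx))
  · refine mem_Cent_of_kEquiv (kEquiv_readingWord_P w) (hT.readingWord_mem_Cent fun j => ?_)
    rcases hcol j with h | h | ⟨ha, hb⟩
    · simpa [h, Cent] using KEquiv.refl [b, a, b]
    · simpa [h] using singleton_mem_Cent_bab hab
    · refine column_mem_Cent (List.pairwise_reverse.2 (hT.col_sorted j)) ?_
      simp [ha, hb]

end Plactic

open Plactic in
theorem stmt_10_general {a b : ℕ} (hab : a < b) (w : List ℕ) :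
    w ∈ Cent [b, a, b] ↔
      (∀ j, (col (P w) j).length = 1 → col (P w) j = [b]) ∧
      (∀ j, 2 ≤ (col (P w) j).length → a ∈ col (P w) j ∧ b ∈ col (P w) j) := by
  rw [mem_Cent_bab_iff hab, ← forall_and]
  refine forall_congr' fun j => ?_
  rcases col (P w) j with _ | ⟨x, _ | ⟨y, l⟩⟩
  · simp
  · simp only [List.mem_singleton, List.length_singleton]
    have hne : ¬(a = x ∧ b = x) := by omega
    simp [hne]
  · simp

open Plactic in
theorem stmt_10 (w : List ℕ) (hw : ∀ x ∈ w, 0 < x) :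
    w ∈ Cent [2, 1, 2] ↔
      (∀ j, (col (P w) j).length = 1 → col (P w) j = [2]) ∧
      (∀ j, 2 ≤ (col (P w) j).length → 1 ∈ col (P w) j ∧ 2 ∈ col (P w) j) :=
  stmt_10_general one_lt_two w
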